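/- arXiv:1612.07395 — 10 statements merged into one kernel-verified Lean document; each statement's English description precedes it below -/
import Mathlib

section
/- Let U : ℝⁿ → ℝ be a C² potential, E ∈ ℝ, and let x : I → ℝⁿ be a C² curve on an open interval I satisfying Newton's equation x''(t) = −∇U(x(t)) for all t ∈ I, with constant energy (1/2)|x'(t)|² + U(x(t)) = E and U(x(t)) < E for all t ∈ I. Fix t₀ ∈ I and let σ(t) = ∫_{t₀}^{t} (E − U(x(τ))) dτ. Then σ is a strictly increasing C¹ diffeomorphism of I onto its image J, and the reparametrized curve y = x ∘ σ⁻¹ : J → ℝⁿ satisfies the geodesic equation of the Jacobi metric 2(E − U(x))δ_{ij}, namely y''(s) = (1/(E − U(y(s)))) [ ⟨∇U(y(s)), y'(s)⟩ y'(s) − (1/2)|y'(s)|² ∇U(y(s)) ] for all s ∈ J. -/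
/-!
Write `F = E - U ∘ x`, so `σ' = F > 0` on the interval. Any right inverse `tinv` of `σ` on the image
is also a left inverse by injectivity, so the inverse function theorem gives `tinv' = 1 / F`, and
the image is a neighbourhood of each of its points. Hence `y' = x' / F` near each `s`; a second
differentiation, with `x'' = -∇U` and `F' = -⟪∇U, x'⟫`, gives
`y'' = F⁻³ ⟪∇U, x'⟫ x' - F⁻² ∇U`. The energy identity `|x'|² = 2 F` turns this into the geodesic
equation.
-/

open scoped RealInnerProductSpace

/-- **Jacobi–Maupertuis principle.** If a curve `x` solves Newton's equation
`x'' = -∇U(x)` with constant energy `E` and `U(x(t)) < E`, then the time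
reparametrization `σ(t) = ∫_{t₀}^t (E - U(x(τ))) dτ` is strictly increasing and `C¹`
on the interval, and the reparametrized curve `y = x ∘ σ⁻¹` is a geodesic of the
Jacobi metric `2(E - U)δᵢⱼ`. -/
theorem jacobi_maupertuis_geodesic {n : ℕ}
    (U : EuclideanSpace ℝ (Fin n) → ℝ) (hU : ContDiff ℝ 2 U)
    (E : ℝ) (a b : ℝ)
    (x : ℝ → EuclideanSpace ℝ (Fin n)) (hx : ContDiffOn ℝ 2 x (Set.Ioo a b))
    (hNewton : ∀ t ∈ Set.Ioo a b, deriv (deriv x) t = -gradient U (x t))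
    (hEnergy : ∀ t ∈ Set.Ioo a b, (1/2) * ‖deriv x t‖^2 + U (x t) = E)
    (hBelow : ∀ t ∈ Set.Ioo a b, U (x t) < E)
    (t₀ : ℝ) (ht₀ : t₀ ∈ Set.Ioo a b)
    (σ : ℝ → ℝ) (hσ : ∀ t, σ t = ∫ τ in t₀..t, (E - U (x τ))) :
    StrictMonoOn σ (Set.Ioo a b) ∧ ContDiffOn ℝ 1 σ (Set.Ioo a b) ∧
    ∀ tinv : ℝ → ℝ,
      (∀ s ∈ σ '' Set.Ioo a b, tinv s ∈ Set.Ioo a b ∧ σ (tinv s) = s) →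
      ∀ s ∈ σ '' Set.Ioo a b,
        deriv (deriv (x ∘ tinv)) s =
          (1 / (E - U ((x ∘ tinv) s))) •
            (⟪gradient U ((x ∘ tinv) s), deriv (x ∘ tinv) s⟫ • deriv (x ∘ tinv) s
              - ((1/2) * ‖deriv (x ∘ tinv) s‖^2) • gradient U ((x ∘ tinv) s)) := by
  have hopen : IsOpen (Set.Ioo a b) := isOpen_Ioo
  have hUd : Differentiable ℝ U := hU.differentiable (by norm_num)
  have hF1 : ContDiffOn ℝ 1 (fun t => E - U (x t)) (Set.Ioo a b) :=
    contDiffOn_const.sub ((hU.comp_contDiffOn hx).of_le (by norm_num))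
  have hFc : ContinuousOn (fun t => E - U (x t)) (Set.Ioo a b) := hF1.continuousOn
  have hFpos : ∀ t ∈ Set.Ioo a b, 0 < E - U (x t) := fun t ht => sub_pos.2 (hBelow t ht)
  have hσd : ∀ t ∈ Set.Ioo a b, HasDerivAt σ (E - U (x t)) t := by
    intro t ht
    have hsub : Set.uIcc t₀ t ⊆ Set.Ioo a b := Set.ordConnected_Ioo.uIcc_subset ht₀ ht
    have h := intervalIntegral.integral_hasDerivAt_right
      ((hFc.mono hsub).intervalIntegrable)
      (hFc.stronglyMeasurableAtFilter hopen t ht) (hFc.continuousAt (hopen.mem_nhds ht))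
    exact h.congr_of_eventuallyEq (Filter.Eventually.of_forall hσ)
  have hmono : StrictMonoOn σ (Set.Ioo a b) := by
    refine strictMonoOn_of_deriv_pos (convex_Ioo a b)
      (fun t ht => (hσd t ht).continuousAt.continuousWithinAt) ?_
    intro t ht
    rw [interior_Ioo] at ht
    rw [(hσd t ht).deriv]
    exact hFpos t ht
  have hσC : ContDiffOn ℝ 1 σ (Set.Ioo a b) := by
    rw [show (1 : WithTop ℕ∞) = 0 + 1 by norm_num, contDiffOn_succ_iff_deriv_of_isOpen hopen]
    refine ⟨fun t ht => (hσd t ht).differentiableAt.differentiableWithinAt, by simp, ?_⟩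
    rw [contDiffOn_zero]
    exact hFc.congr fun t ht => (hσd t ht).deriv
  refine ⟨hmono, hσC, ?_⟩
  intro tinv htinv
  have hleft : ∀ t ∈ Set.Ioo a b, tinv (σ t) = t := fun t ht =>
    hmono.injOn (htinv _ ⟨t, ht, rfl⟩).1 ht (htinv _ ⟨t, ht, rfl⟩).2
  have hσs : ∀ t ∈ Set.Ioo a b, HasStrictDerivAt σ (E - U (x t)) t := fun t ht =>
    (hσC.contDiffAt (hopen.mem_nhds ht)).hasStrictDerivAt' (hσd t ht) (by norm_num)
  have htd : ∀ t ∈ Set.Ioo a b, HasDerivAt tinv (E - U (x t))⁻¹ (σ t) := fun t ht =>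
    ((hσs t ht).to_local_left_inverse (hFpos t ht).ne'
      (Filter.eventually_of_mem (hopen.mem_nhds ht) hleft)).hasDerivAt
  have himg : ∀ t ∈ Set.Ioo a b, σ '' Set.Ioo a b ∈ nhds (σ t) := by
    intro t ht
    rw [← (hσs t ht).map_nhds_eq (hFpos t ht).ne']
    exact Filter.image_mem_map (hopen.mem_nhds ht)
  have hxd : ∀ t ∈ Set.Ioo a b, HasDerivAt x (deriv x t) t := fun t ht =>
    ((hx.differentiableOn (by norm_num)).differentiableAt (hopen.mem_nhds ht)).hasDerivAt
  have hxdd : ∀ t ∈ Set.Ioo a b, HasDerivAt (deriv x) (-gradient U (x t)) t := by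
    intro t ht
    have h : ContDiffOn ℝ 1 (deriv x) (Set.Ioo a b) :=
      hx.deriv_of_isOpen hopen (by norm_num)
    rw [← hNewton t ht]
    exact ((h.differentiableOn (by norm_num)).differentiableAt (hopen.mem_nhds ht)).hasDerivAt
  have hFd : ∀ t ∈ Set.Ioo a b,
      HasDerivAt (fun t => E - U (x t)) (-⟪gradient U (x t), deriv x t⟫) t := by
    intro t ht
    have h := ((hUd (x t)).hasGradientAt.hasFDerivAt.comp_hasDerivAt t (hxd t ht)).const_sub E
    simpa using h
  have hyd : ∀ t ∈ Set.Ioo a b,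
      deriv (x ∘ tinv) (σ t) = (E - U (x t))⁻¹ • deriv x t := by
    intro t ht
    have h : HasDerivAt x (deriv x t) (tinv (σ t)) := by
      rw [hleft t ht]
      exact hxd t ht
    exact (h.scomp (σ t) (htd t ht)).deriv
  rintro s ⟨t, ht, rfl⟩
  -- The formula for `y'` holds on a neighbourhood of `σ t`, so it can be differentiated there.
  have hev : deriv (x ∘ tinv) =ᶠ[nhds (σ t)]
      ((fun r => (E - U (x r))⁻¹ • deriv x r) ∘ tinv) := by
    filter_upwards [himg t ht]
    rintro _ ⟨r, hr, rfl⟩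
    simp only [Function.comp_apply, hleft r hr]
    exact hyd r hr
  have hF := (hFpos t ht).ne'
  have hG := ((hFd t ht).fun_inv hF).fun_smul (hxdd t ht)
  rw [← hleft t ht] at hG
  have hydd := (hG.scomp (σ t) (htd t ht)).deriv
  rw [hleft t ht] at hydd
  have hnorm : ‖deriv x t‖ ^ 2 = 2 * (E - U (x t)) := by linarith [hEnergy t ht]
  rw [hev.deriv_eq, hydd, hyd t ht]
  simp only [Function.comp_apply, hleft t ht, norm_smul, mul_pow, hnorm, inner_smul_right,
    Real.norm_eq_abs, sq_abs]
  match_scalars <;> field_simp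
end

section
/- Let α, E ∈ ℝ and let f(r) = √(E + α/r) on the set of r > 0 with rE + α > 0. Then the Gaussian curvature of the conformally flat metric f(r)²(dr² + r²dθ²), given by K_G(r) = −(1/(r f(r)²)) · d/dr( (1/f(r)) · d/dr( r f(r) ) ), satisfies K_G(r) = −αE / (2(rE + α)³) for all such r. -/
/-! Since `f² = E + α/r`, the logarithmic derivative `f'/f = (f²)'/(2f²)` is rational in `r`, so
`(1/f) (r f)' = 1 + r f'/f = 1 - α / (2 (r E + α))` on the open set where `r > 0` and `r E + α > 0`
(`inv_mul_deriv_kepler`). Differentiating this gives `α E / (2 (r E + α)²)`, and dividing by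
`-r f² = -(r E + α)` gives the curvature. -/

lemma inv_mul_deriv_kepler (α E s : ℝ) (hs : 0 < s) (h : 0 < s * E + α) :
    (1 / Real.sqrt (E + α / s)) * deriv (fun u => u * Real.sqrt (E + α / u)) s
      = 1 - α / (2 * (s * E + α)) := by
  have hg : E + α / s = (s * E + α) / s := by field_simp
  have hpos : 0 < E + α / s := hg ▸ div_pos h hs
  have h1 : HasDerivAt (fun u : ℝ => E + α / u) (-α / s ^ 2) s := by
    have := ((hasDerivAt_const s α).div (hasDerivAt_id s) hs.ne').const_add E
    simpa using this
  have h2 := (hasDerivAt_id s).mul (h1.sqrt hpos.ne')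
  have h3 : deriv (fun u => u * Real.sqrt (E + α / u)) s = _ := h2.deriv
  rw [h3]
  have hq : 0 < Real.sqrt (E + α / s) := Real.sqrt_pos.mpr hpos
  have hsq : Real.sqrt (E + α / s) ^ 2 = (s * E + α) / s := by rw [Real.sq_sqrt hpos.le, hg]
  simp only [id]
  generalize Real.sqrt (E + α / s) = q at hq hsq
  calc 1 / q * (1 * q + s * (-α / s ^ 2 / (2 * q))) = 1 - α / (2 * s * q ^ 2) := by
        field_simp
        ring
    _ = 1 - α / (2 * (s * E + α)) := by
        rw [hsq]
        field_simp

/-- The Gaussian curvature of the Jacobi metric of the planar Kepler problem.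
For the conformal factor `f(r) = √(E + α/r)`, the Gaussian curvature
`K_G = -(1/(r f²)) d/dr((1/f) d/dr(r f))` of the metric `f²(dr² + r²dθ²)`
equals `-αE / (2(rE + α)³)` wherever `r > 0` and `rE + α > 0`. -/
theorem gaussian_curvature_jacobi_kepler (α E : ℝ)
    (f : ℝ → ℝ) (hf : ∀ r, f r = Real.sqrt (E + α / r))
    (K : ℝ → ℝ)
    (hK : ∀ r, K r = -(1 / (r * (f r)^2)) *
        deriv (fun s => (1 / f s) * deriv (fun u => u * f u) s) r) :
    ∀ r : ℝ, 0 < r → 0 < r * E + α →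
      K r = -(α * E) / (2 * (r * E + α)^3) := by
  intro r hr h
  obtain rfl : f = fun r => Real.sqrt (E + α / r) := funext hf
  -- The formula for the inner expression must hold near `r`, not only at `r`, to be differentiated.
  have hev : (fun s => (1 / Real.sqrt (E + α / s)) *
      deriv (fun u => u * Real.sqrt (E + α / u)) s)
      =ᶠ[nhds r] fun s => 1 - α / (2 * (s * E + α)) := by
    have hc : ContinuousAt (fun s : ℝ => s * E + α) r := by fun_prop
    filter_upwards [lt_mem_nhds hr, hc.eventually (lt_mem_nhds h)] with s hs hs'
    exact inv_mul_deriv_kepler α E s hs hs'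
  have hd : HasDerivAt (fun s => 1 - α / (2 * (s * E + α)))
      (α * E / (2 * (r * E + α) ^ 2)) r := by
    have hl : HasDerivAt (fun s : ℝ => 2 * (s * E + α)) (2 * E) r := by
      simpa using (((hasDerivAt_id r).mul_const E).add_const α).const_mul 2
    have := ((hasDerivAt_const r α).div hl (by positivity)).const_sub 1
    refine this.congr_deriv ?_
    field_simp
    ring
  have hg : E + α / r = (r * E + α) / r := by field_simp
  rw [hK, hev.deriv_eq, hd.deriv]
  beta_reduce
  rw [Real.sq_sqrt (hg ▸ (div_pos h hr).le), hg]
  field_simp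
end

section
/- Let (q₁, q₂) ∈ ℝ² with (q₁, q₂) ≠ (0,0), (p₁, p₂) ∈ ℝ², and a, b ∈ ℝ. With the Bohlin-transformed variables x = (q₁² − q₂²)/2, y = q₁q₂, p_x = (q₁p₁ − q₂p₂)/(q₁² + q₂²), p_y = (q₂p₁ + q₁p₂)/(q₁² + q₂²), the Kepler-type Hamiltonian and the oscillator Hamiltonian are related by: p_x² + p_y² − b/√(x² + y²) + a = (2/(q₁² + q₂²)) · [ (1/2)(p₁² + p₂²) + (a/2)(q₁² + q₂²) − b ]. In particular, the zero level set of the oscillator Hamiltonian H_osc = (1/2)(p₁² + p₂²) + (a/2)(q₁² + q₂²) − b is mapped onto the zero level set of the Kepler-type Hamiltonian p_x² + p_y² − b/√(x² + y²) + a. -/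
/-- **Bohlin duality.** Under the Bohlin transformation, the Kepler-type Hamiltonian
`p_x² + p_y² - b/√(x² + y²) + a` equals `2/(q₁² + q₂²)` times the oscillator
Hamiltonian `(1/2)(p₁² + p₂²) + (a/2)(q₁² + q₂²) - b`; in particular the zero level
set of the oscillator Hamiltonian is mapped to the zero level set of the
Kepler-type Hamiltonian. -/
theorem bohlin_duality_hamiltonians (q₁ q₂ p₁ p₂ a b : ℝ) (hq : (q₁, q₂) ≠ (0, 0))
    (x y px py : ℝ)
    (hx : x = (q₁^2 - q₂^2)/2) (hy : y = q₁*q₂)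
    (hpx : px = (q₁*p₁ - q₂*p₂)/(q₁^2 + q₂^2))
    (hpy : py = (q₂*p₁ + q₁*p₂)/(q₁^2 + q₂^2)) :
    px^2 + py^2 - b / Real.sqrt (x^2 + y^2) + a
      = (2/(q₁^2 + q₂^2)) * ((1/2)*(p₁^2 + p₂^2) + (a/2)*(q₁^2 + q₂^2) - b) ∧
    ((1/2)*(p₁^2 + p₂^2) + (a/2)*(q₁^2 + q₂^2) - b = 0 →
      px^2 + py^2 - b / Real.sqrt (x^2 + y^2) + a = 0) := by
  have hr : 0 < q₁^2 + q₂^2 := by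
    by_contra h
    have h1 : q₁ = 0 := by nlinarith [sq_nonneg q₁, sq_nonneg q₂]
    have h2 : q₂ = 0 := by nlinarith [sq_nonneg q₁, sq_nonneg q₂]
    exact hq (by rw [h1, h2])
  -- In complex notation `x + iy = q² / 2` with `q = q₁ + i q₂`, so `|x + iy| = |q|² / 2`.
  have hs : Real.sqrt (x^2 + y^2) = (q₁^2 + q₂^2)/2 := by
    rw [show x^2 + y^2 = ((q₁^2 + q₂^2)/2)^2 by rw [hx, hy]; ring]
    exact Real.sqrt_sq (by positivity)
  -- Likewise `p_x + i p_y = p q / |q|²` with `p = p₁ + i p₂`.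
  have hp : px^2 + py^2 = (p₁^2 + p₂^2)/(q₁^2 + q₂^2) := by
    rw [hpx, hpy]
    field_simp
    ring
  have key : px^2 + py^2 - b / Real.sqrt (x^2 + y^2) + a
      = (2/(q₁^2 + q₂^2)) * ((1/2)*(p₁^2 + p₂^2) + (a/2)*(q₁^2 + q₂^2) - b) := by
    rw [hp, hs]
    field_simp
    ring
  exact ⟨key, fun h => by rw [key, h, mul_zero]⟩
end

section
/- Let n ≥ 1, β > 0, E ∈ ℝ, and define on (ℝⁿ∖{0}) × ℝⁿ the Kepler Hamiltonian H(q, p) = (1/2)|p|² − β/|q| and Moser's function F(q, p) = (|p|² − 2E)² |q|² / (8β²). Then at every point (q, p) with q ≠ 0 and H(q, p) = E, the partial gradients satisfy ∇_p F(q, p) = (|q|/β) ∇_p H(q, p) and ∇_q F(q, p) = (|q|/β) ∇_q H(q, p); that is, the Hamiltonian vector fields of F and H are proportional on the energy surface, X_F = (|q|/β) X_H. -/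
/-!
Each of the four partial functions depends on its variable only through the squared norm, so
every partial gradient is given by the chain rule `∇ (g ∘ ‖·‖²) = 2 g'(‖x‖²) x`
(`hasGradientAt_comp_norm_sq`). On `H = E` one has `‖p‖² - 2E = 2β/‖q‖`; substituting this,
the `p`-gradients are `(‖q‖/β) p` and `p`, and the `q`-gradients are `q/‖q‖²` and `β q/‖q‖³`.
-/

theorem hasGradientAt_comp_norm_sq {V : Type*} [NormedAddCommGroup V] [InnerProductSpace ℝ V]
    [CompleteSpace V] {g : ℝ → ℝ} {g' : ℝ} {x : V} (hg : HasDerivAt g g' (‖x‖ ^ 2)) :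
    HasGradientAt (fun y : V => g (‖y‖ ^ 2)) ((2 * g') • x) x := by
  rw [hasGradientAt_iff_hasFDerivAt]
  have h := hg.comp_hasFDerivAt x (hasStrictFDerivAt_norm_sq x).hasFDerivAt
  refine h.congr_fderiv ?_
  ext y
  simp
  ring

/-- On the Kepler energy surface `H = E`, the partial gradients of Moser's
regularizing function `F(q,p) = (|p|² - 2E)²|q|²/(8β²)` are `|q|/β` times those of
the Kepler Hamiltonian `H(q,p) = (1/2)|p|² - β/|q|`; i.e. the Hamiltonian vector
fields satisfy `X_F = (|q|/β) X_H` on the energy surface. -/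
theorem moser_vector_field_proportional {n : ℕ} (hn : 1 ≤ n)
    (β : ℝ) (hβ : 0 < β) (E : ℝ)
    (H F : EuclideanSpace ℝ (Fin n) → EuclideanSpace ℝ (Fin n) → ℝ)
    (hH : ∀ q p, H q p = (1/2) * ‖p‖^2 - β / ‖q‖)
    (hF : ∀ q p, F q p = (‖p‖^2 - 2*E)^2 * ‖q‖^2 / (8 * β^2)) :
    ∀ (q p : EuclideanSpace ℝ (Fin n)), q ≠ 0 → H q p = E →
      gradient (fun p' => F q p') p = (‖q‖ / β) • gradient (fun p' => H q p') p ∧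
      gradient (fun q' => F q' p) q = (‖q‖ / β) • gradient (fun q' => H q' p) q := by
  intro q p hq hE
  have hr : 0 < ‖q‖ := norm_pos_iff.mpr hq
  -- the energy equation `H = E`, solved for the factor occurring in `F`
  have key : ‖p‖ ^ 2 - 2 * E = 2 * β / ‖q‖ := by
    rw [← hE, hH]; ring
  simp only [hH, hF]
  constructor
  · have h1 : HasDerivAt (fun s : ℝ => (s - 2 * E) ^ 2 * ‖q‖ ^ 2 / (8 * β ^ 2))
        (2 * (‖p‖ ^ 2 - 2 * E) * ‖q‖ ^ 2 / (8 * β ^ 2)) (‖p‖ ^ 2) := by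
      simpa using ((((hasDerivAt_id (‖p‖ ^ 2)).sub_const (2 * E)).pow 2).mul_const
        (‖q‖ ^ 2)).div_const (8 * β ^ 2)
    have h2 : HasDerivAt (fun s : ℝ => (1 / 2) * s - β / ‖q‖) (1 / 2) (‖p‖ ^ 2) := by
      simpa using ((hasDerivAt_id (‖p‖ ^ 2)).const_mul (1 / 2 : ℝ)).sub_const (β / ‖q‖)
    rw [(hasGradientAt_comp_norm_sq h1).gradient, (hasGradientAt_comp_norm_sq h2).gradient,
      smul_smul, key]
    congr 1
    field_simp
    norm_num
  · have h1 : HasDerivAt (fun s : ℝ => (‖p‖ ^ 2 - 2 * E) ^ 2 * s / (8 * β ^ 2))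
        ((‖p‖ ^ 2 - 2 * E) ^ 2 / (8 * β ^ 2)) (‖q‖ ^ 2) := by
      simpa using ((hasDerivAt_id (‖q‖ ^ 2)).const_mul
        ((‖p‖ ^ 2 - 2 * E) ^ 2)).div_const (8 * β ^ 2)
    have h2 : HasDerivAt (fun s : ℝ => (1 / 2) * ‖p‖ ^ 2 - β / √s)
        (β / (2 * ‖q‖ ^ 3)) (‖q‖ ^ 2) := by
      have hs := Real.hasDerivAt_sqrt (pow_pos hr 2).ne'
      have h := ((hasDerivAt_const (‖q‖ ^ 2) β).div hs
        (by rw [Real.sqrt_sq hr.le]; exact hr.ne')).const_sub ((1 / 2) * ‖p‖ ^ 2)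
      refine h.congr_deriv ?_
      rw [Real.sqrt_sq hr.le]
      field_simp
      ring
    have h3 := hasGradientAt_comp_norm_sq h2
    simp only [Real.sqrt_sq (norm_nonneg _)] at h3
    rw [(hasGradientAt_comp_norm_sq h1).gradient, h3.gradient, smul_smul, key]
    congr 1
    field_simp
    norm_num
end

section
/- (Moser's regularization theorem.) Let β > 0, E ∈ ℝ, and let (q, p) : I → (ℝⁿ∖{0}) × ℝⁿ be a C¹ solution of the Kepler Hamilton equations q'(t) = p(t), p'(t) = −β q(t)/|q(t)|³ on an open interval I, with H(q(t), p(t)) = (1/2)|p(t)|² − β/|q(t)| = E for all t ∈ I. Fix t₀ ∈ I and let τ(t) = ∫_{t₀}^{t} β/|q(u)| du. Then τ is a strictly increasing C¹ diffeomorphism onto its image J, and the reparametrized curve (Q, P) = (q ∘ τ⁻¹, p ∘ τ⁻¹) : J → (ℝⁿ∖{0}) × ℝⁿ solves Hamilton's equations for Moser's function F(q, p) = (|p|² − 2E)²|q|²/(8β²): Q'(τ) = ∇_P F(Q(τ), P(τ)) and P'(τ) = −∇_Q F(Q(τ), P(τ)) for all τ ∈ J. -/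
/-!
Since `dτ/dt = β/|q| > 0`, the function `τ` is a strictly increasing local diffeomorphism and the
chain rule gives `Q' = (|q|/β) p` and `P' = -q/|q|²`. On the energy surface `|p|² - 2E = 2β/|q|`,
so these are exactly `∇_P F = (|p|² - 2E)|q|²/(2β²) p` and `-∇_Q F = -(|p|² - 2E)²/(4β²) q`.

The equations of motion are stated through `deriv`, which vanishes at points of
non-differentiability, so the differentiability of `p` and `q` has to be recovered.
* `p` is differentiable, because its `deriv` never vanishes. Energy conservation then makes `|q|`
  continuous.
* `q` is differentiable wherever `p ≠ 0`. The zeros `t₁` of `p` are isolated, since `p'(t₁) ≠ 0`.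
  On each side of such a zero `q` is a primitive of `p`, hence has a limit `L` at `t₁`; therefore
  `p'` has the limit `-β L/|q(t₁)|³`, which must be the one-sided derivative of `p`, i.e.
  `p'(t₁) = -β q(t₁)/|q(t₁)|³`. So `L = q(t₁)` on both sides (`kepler_one_sided`), and
  `q(t) = q(t₁) + ∫_{t₁}^t p` near `t₁` (`kepler_hasDerivAt_q`).
-/

open Set Filter Topology

section Kepler

variable {V : Type*} [NormedAddCommGroup V]

lemma kepler_hasDerivAt_p [NormedSpace ℝ V] {β a b : ℝ} (hβ : 0 < β) {q p : ℝ → V}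
    (hq0 : ∀ t ∈ Ioo a b, q t ≠ 0)
    (hp' : ∀ t ∈ Ioo a b, deriv p t = -((β / ‖q t‖^3) • q t)) :
    ∀ t ∈ Ioo a b, HasDerivAt p (-((β / ‖q t‖^3) • q t)) t := by
  intro t ht
  rw [← hp' t ht]
  refine (differentiableAt_of_deriv_ne_zero ?_).hasDerivAt
  rw [hp' t ht]
  have h1 := norm_pos_iff.mpr (hq0 t ht)
  exact neg_ne_zero.mpr (smul_ne_zero (by positivity) (hq0 t ht))

lemma kepler_continuousOn_norm_q {β E a b : ℝ} (hβ : 0 < β) {q p : ℝ → V}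
    (hq0 : ∀ t ∈ Ioo a b, q t ≠ 0) (hp : ContinuousOn p (Ioo a b))
    (hE : ∀ t ∈ Ioo a b, (1/2) * ‖p t‖^2 - β / ‖q t‖ = E) :
    ContinuousOn (fun t => ‖q t‖) (Ioo a b) := by
  have key : ∀ t ∈ Ioo a b, (1/2) * ‖p t‖^2 - E = β / ‖q t‖ := fun t ht => by
    linarith [hE t ht]
  have hc : ContinuousOn (fun t => β / ((1/2) * ‖p t‖^2 - E)) (Ioo a b) := by
    refine continuousOn_const.div ((continuousOn_const.mul (hp.norm.pow 2)).sub
      continuousOn_const) fun t ht => ?_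
    have h1 := norm_pos_iff.mpr (hq0 t ht)
    rw [key t ht]
    positivity
  refine hc.congr fun t ht => ?_
  have h1 := norm_pos_iff.mpr (hq0 t ht)
  simp only [key t ht]
  field_simp

/-- On an interval `s` free of zeros of `p` and adherent to `t₁`, the position is the primitive
of `p` with value `q t₁` at `t₁`: the limit of `q` along `s` is identified with `q t₁` by comparing
the limit of `p'` with the derivative of `p` at `t₁`. -/
lemma kepler_one_sided [NormedSpace ℝ V] {β a b : ℝ} (hβ : 0 < β) {q p : ℝ → V}
    (hq0 : ∀ t ∈ Ioo a b, q t ≠ 0)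
    (hq' : ∀ t ∈ Ioo a b, deriv q t = p t)
    (hp : ∀ t ∈ Ioo a b, HasDerivAt p (-((β / ‖q t‖^3) • q t)) t)
    (hqn : ContinuousOn (fun t => ‖q t‖) (Ioo a b))
    {g : ℝ → V} (hg : ∀ t ∈ Ioo a b, HasDerivAt g (p t) t)
    {t₁ : ℝ} (ht₁ : t₁ ∈ Ioo a b) (hg₁ : g t₁ = 0)
    {s : Set ℝ} (hso : IsOpen s) (hsc : Convex ℝ s) (hsn : s.Nonempty) (hscl : closure s ⊆ Ioo a b)
    (hcl : t₁ ∈ closure s) (hps : ∀ t ∈ s, p t ≠ 0) :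
    ∀ t ∈ s, q t = g t + q t₁ := by
  have hsI : s ⊆ Ioo a b := subset_closure.trans hscl
  have hq : ∀ t ∈ s, HasDerivAt q (p t) t := fun t ht => by
    rw [← hq' t (hsI ht)]
    refine (differentiableAt_of_deriv_ne_zero ?_).hasDerivAt
    rw [hq' t (hsI ht)]
    exact hps t ht
  obtain ⟨C, hC⟩ : ∃ C, ∀ t ∈ s, q t - g t = C := by
    refine hso.exists_is_const_of_deriv_eq_zero hsc.isPreconnected
      (f := fun t => q t - g t) ?_ ?_
    · intro t ht
      exact ((hq t ht).sub (hg t (hsI ht))).differentiableAt.differentiableWithinAt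
    · intro t ht
      exact ((hq t ht).sub (hg t (hsI ht))).deriv.trans (sub_self _)
  have hgt : Tendsto g (𝓝[s] t₁) (𝓝 0) := by
    have := (hg t₁ ht₁).continuousAt.tendsto
    rw [hg₁] at this
    exact this.mono_left nhdsWithin_le_nhds
  have hqt : Tendsto q (𝓝[s] t₁) (𝓝 C) := by
    have : Tendsto (fun t => C + g t) (𝓝[s] t₁) (𝓝 (C + 0)) := hgt.const_add C
    rw [add_zero] at this
    refine this.congr' ?_
    filter_upwards [self_mem_nhdsWithin] with t ht
    rw [← hC t ht]; abel
  have hpos := norm_pos_iff.mpr (hq0 t₁ ht₁)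
  have hnt : Tendsto (fun t => ‖q t‖) (𝓝[s] t₁) (𝓝 ‖q t₁‖) :=
    (hqn.continuousAt (isOpen_Ioo.mem_nhds ht₁)).tendsto.mono_left nhdsWithin_le_nhds
  have hpt : Tendsto (fun t => -((β / ‖q t‖^3) • q t)) (𝓝[s] t₁)
      (𝓝 (-((β / ‖q t₁‖^3) • C))) :=
    ((tendsto_const_nhds.div (hnt.pow 3) (by positivity)).smul hqt).neg
  have hF : HasFDerivWithinAt p
      (ContinuousLinearMap.toSpanSingleton ℝ (-((β / ‖q t₁‖^3) • C))) (closure s) t₁ := by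
    refine hasFDerivWithinAt_closure_of_tendsto_fderiv
      (fun t ht => (hp t (hsI ht)).differentiableAt.differentiableWithinAt) hsc hso ?_ ?_
    · exact fun y hy => (hp y (hscl hy)).continuousAt.continuousWithinAt
    · have := ((ContinuousLinearMap.toSpanSingletonCLE (𝕜 := ℝ) (E := V)).continuous.tendsto
        _).comp hpt
      refine this.congr' ?_
      filter_upwards [self_mem_nhdsWithin] with t ht
      exact (hp t (hsI ht)).hasFDerivAt.fderiv.symm
  have huniq : UniqueDiffWithinAt ℝ (closure s) t₁ := by
    refine uniqueDiffWithinAt_convex hsc.closure ?_ (subset_closure hcl)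
    exact hsn.mono (hso.subset_interior_iff.mpr subset_closure)
  have heq := huniq.eq_deriv _ (hp t₁ ht₁).hasDerivWithinAt hF.hasDerivWithinAt
  have hCq : q t₁ = C := by
    have hne : β / ‖q t₁‖^3 ≠ 0 := by positivity
    simpa [hne, hβ.ne', hq0 t₁ ht₁] using heq
  intro t ht
  rw [hCq, ← hC t ht]; abel

/-- The position is genuinely differentiable, also at the zeros of the momentum, where
`deriv q t = p t = 0` carries no information by itself. -/
lemma kepler_hasDerivAt_q [NormedSpace ℝ V] [CompleteSpace V] {β a b : ℝ} (hβ : 0 < β) {q p : ℝ → V}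
    (hq0 : ∀ t ∈ Ioo a b, q t ≠ 0)
    (hq' : ∀ t ∈ Ioo a b, deriv q t = p t)
    (hp : ∀ t ∈ Ioo a b, HasDerivAt p (-((β / ‖q t‖^3) • q t)) t)
    (hqn : ContinuousOn (fun t => ‖q t‖) (Ioo a b)) :
    ∀ t ∈ Ioo a b, HasDerivAt q (p t) t := by
  intro t₁ ht₁
  have hpc : ContinuousOn p (Ioo a b) := fun t ht => (hp t ht).continuousAt.continuousWithinAt
  set g : ℝ → V := fun t => ∫ u in t₁..t, p u with hgdef
  have hg : ∀ t ∈ Ioo a b, HasDerivAt g (p t) t := fun t ht =>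
    intervalIntegral.integral_hasDerivAt_right
      ((hpc.mono (ordConnected_Ioo.uIcc_subset ht₁ ht)).intervalIntegrable)
      (hpc.stronglyMeasurableAtFilter isOpen_Ioo t ht)
      (hpc.continuousAt (isOpen_Ioo.mem_nhds ht))
  have hg₁ : g t₁ = 0 := by simp [hgdef]
  have hne : -((β / ‖q t₁‖^3) • q t₁) ≠ 0 := by
    have h1 := norm_pos_iff.mpr (hq0 t₁ ht₁)
    exact neg_ne_zero.mpr (smul_ne_zero (by positivity) (hq0 t₁ ht₁))
  -- `p' t₁ ≠ 0`, so `p` has no zero in a punctured neighbourhood of `t₁`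
  have hev : ∀ᶠ t in 𝓝 t₁, t ≠ t₁ → p t ≠ 0 :=
    eventually_nhdsWithin_iff.mp ((hp t₁ ht₁).eventually_ne hne (c := 0))
  obtain ⟨δ, hδ, hball⟩ := Metric.nhds_basis_closedBall.eventually_iff.mp
    (hev.and (isOpen_Ioo.mem_nhds ht₁ : ∀ᶠ t in 𝓝 t₁, t ∈ Ioo a b))
  rw [Real.closedBall_eq_Icc] at hball
  have hR := kepler_one_sided hβ hq0 hq' hp hqn hg ht₁ hg₁ (s := Ioo t₁ (t₁ + δ)) isOpen_Ioo
    (convex_Ioo _ _) (nonempty_Ioo.mpr (by linarith))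
    (by
      rw [closure_Ioo (by linarith)]
      exact fun t ht => (hball ⟨by linarith [ht.1], ht.2⟩).2)
    (by rw [closure_Ioo (by linarith)]; exact ⟨le_rfl, by linarith⟩)
    (fun t ht => (hball ⟨by linarith [ht.1], ht.2.le⟩).1 ht.1.ne')
  have hL := kepler_one_sided hβ hq0 hq' hp hqn hg ht₁ hg₁ (s := Ioo (t₁ - δ) t₁) isOpen_Ioo
    (convex_Ioo _ _) (nonempty_Ioo.mpr (by linarith))
    (by
      rw [closure_Ioo (by linarith)]
      exact fun t ht => (hball ⟨ht.1, by linarith [ht.2]⟩).2)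
    (by rw [closure_Ioo (by linarith)]; exact ⟨by linarith, le_rfl⟩)
    (fun t ht => (hball ⟨ht.1.le, by linarith [ht.2]⟩).1 ht.2.ne)
  refine ((hg t₁ ht₁).add_const (q t₁)).congr_of_eventuallyEq ?_
  filter_upwards [Ioo_mem_nhds (show t₁ - δ < t₁ by linarith) (show t₁ < t₁ + δ by linarith)]
    with t ht
  rcases lt_trichotomy t t₁ with h | h | h
  · exact hL t ⟨ht.1, h⟩
  · simp [h, hg₁]
  · exact hR t ⟨h, ht.2⟩

lemma moser_gradient_P [InnerProductSpace ℝ V] [CompleteSpace V] (c k : ℝ) (P : V) :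
    gradient (fun P : V => (‖P‖^2 - k)^2 * c) P = (4 * (‖P‖^2 - k) * c) • P := by
  refine HasGradientAt.gradient ?_
  rw [hasGradientAt_iff_hasFDerivAt]
  have h := (((hasStrictFDerivAt_norm_sq P).hasFDerivAt.sub_const k).pow 2).mul_const c
  refine h.congr_fderiv ?_
  ext v
  simp
  ring

lemma moser_gradient_Q [InnerProductSpace ℝ V] [CompleteSpace V] (c : ℝ) (Q : V) :
    gradient (fun Q : V => c * ‖Q‖^2) Q = (2 * c) • Q := by
  refine HasGradientAt.gradient ?_
  rw [hasGradientAt_iff_hasFDerivAt]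
  have h := (hasStrictFDerivAt_norm_sq Q).hasFDerivAt.const_mul c
  refine h.congr_fderiv ?_
  ext v
  simp
  ring

end Kepler

/-- A right inverse on `f '' s` of an injective function with nonvanishing strict derivatives
satisfies the inverse function rule. Its continuity is not assumed: `f` maps neighbourhoods onto
neighbourhoods, and injectivity makes the right inverse two-sided. -/
lemma hasDerivAt_right_inverse {f g : ℝ → ℝ} {s : Set ℝ} (hs : IsOpen s) (hinj : InjOn f s)
    (hg : ∀ y ∈ f '' s, g y ∈ s ∧ f (g y) = y) {x f' : ℝ} (hx : x ∈ s)
    (hf : HasStrictDerivAt f f' x) (hf' : f' ≠ 0) : HasDerivAt g f'⁻¹ (f x) := by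
  have hmap := hf.map_nhds_eq hf'
  have hleft : ∀ u ∈ s, g (f u) = u := fun u hu =>
    hinj (hg _ (mem_image_of_mem f hu)).1 hu (hg _ (mem_image_of_mem f hu)).2
  have hcont : ContinuousAt g (f x) := by
    rw [ContinuousAt, ← hmap, tendsto_map'_iff, hleft x hx]
    refine tendsto_id.congr' ?_
    filter_upwards [hs.mem_nhds hx] with u hu
    exact (hleft u hu).symm
  have himg : f '' s ∈ 𝓝 (f x) := by
    rw [← hmap]
    exact image_mem_map (hs.mem_nhds hx)
  refine HasDerivAt.of_local_left_inverse (f := f) hcont ?_ hf' ?_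
  · rw [hleft x hx]; exact hf.hasDerivAt
  · filter_upwards [himg] with y hy
    exact (hg y hy).2

/-- **Moser's regularization theorem.** If `(q, p)` solves the Kepler Hamilton
equations `q' = p`, `p' = -βq/|q|³` on the energy surface `H = E`, then the
fictitious time `τ(t) = ∫_{t₀}^t β/|q(u)| du` is strictly increasing and `C¹`, and
the reparametrized curve `(Q, P) = (q ∘ τ⁻¹, p ∘ τ⁻¹)` solves Hamilton's equations
for Moser's function `F(q,p) = (|p|² - 2E)²|q|²/(8β²)`. -/
theorem moser_regularization {n : ℕ} (hn : 1 ≤ n)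
    (β : ℝ) (hβ : 0 < β) (E : ℝ) (a b : ℝ)
    (q p : ℝ → EuclideanSpace ℝ (Fin n))
    (hq0 : ∀ t ∈ Set.Ioo a b, q t ≠ 0)
    (hq' : ∀ t ∈ Set.Ioo a b, deriv q t = p t)
    (hp' : ∀ t ∈ Set.Ioo a b, deriv p t = -((β / ‖q t‖^3) • q t))
    (hE : ∀ t ∈ Set.Ioo a b, (1/2) * ‖p t‖^2 - β / ‖q t‖ = E)
    (t₀ : ℝ) (ht₀ : t₀ ∈ Set.Ioo a b)
    (τ : ℝ → ℝ) (hτ : ∀ t, τ t = ∫ u in t₀..t, β / ‖q u‖)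
    (F : EuclideanSpace ℝ (Fin n) → EuclideanSpace ℝ (Fin n) → ℝ)
    (hF : ∀ Q P, F Q P = (‖P‖^2 - 2*E)^2 * ‖Q‖^2 / (8 * β^2)) :
    StrictMonoOn τ (Set.Ioo a b) ∧ ContDiffOn ℝ 1 τ (Set.Ioo a b) ∧
    ∀ tinv : ℝ → ℝ,
      (∀ s ∈ τ '' Set.Ioo a b, tinv s ∈ Set.Ioo a b ∧ τ (tinv s) = s) →
      ∀ s ∈ τ '' Set.Ioo a b,
        deriv (q ∘ tinv) s
            = gradient (fun P => F (q (tinv s)) P) (p (tinv s)) ∧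
        deriv (p ∘ tinv) s
            = -gradient (fun Q => F Q (p (tinv s))) (q (tinv s)) := by
  have hp := kepler_hasDerivAt_p hβ hq0 hp'
  have hpc : ContinuousOn p (Ioo a b) := fun t ht => (hp t ht).continuousAt.continuousWithinAt
  have hqn := kepler_continuousOn_norm_q hβ hq0 hpc hE
  have hq := kepler_hasDerivAt_q hβ hq0 hq' hp hqn
  have hpos : ∀ t ∈ Ioo a b, 0 < β / ‖q t‖ := fun t ht =>
    div_pos hβ (norm_pos_iff.mpr (hq0 t ht))
  have hc : ContinuousOn (fun t => β / ‖q t‖) (Ioo a b) :=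
    continuousOn_const.div hqn fun t ht => norm_ne_zero_iff.mpr (hq0 t ht)
  have hτd : ∀ t ∈ Ioo a b, HasStrictDerivAt τ (β / ‖q t‖) t := fun t ht => by
    rw [funext hτ]
    exact hasStrictDerivAt_of_hasDerivAt_of_continuousAt
      (f' := fun t => β / ‖q t‖)
      (by
        filter_upwards [isOpen_Ioo.mem_nhds ht] with u hu
        exact intervalIntegral.integral_hasDerivAt_right
          ((hc.mono (ordConnected_Ioo.uIcc_subset ht₀ hu)).intervalIntegrable)
          (hc.stronglyMeasurableAtFilter isOpen_Ioo u hu)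
          (hc.continuousAt (isOpen_Ioo.mem_nhds hu)))
      (hc.continuousAt (isOpen_Ioo.mem_nhds ht))
  have hmono : StrictMonoOn τ (Ioo a b) := by
    refine strictMonoOn_of_deriv_pos (convex_Ioo a b)
      (fun t ht => (hτd t ht).hasDerivAt.continuousAt.continuousWithinAt) fun t ht => ?_
    rw [interior_Ioo] at ht
    rw [(hτd t ht).hasDerivAt.deriv]
    exact hpos t ht
  refine ⟨hmono, ?_, ?_⟩
  · rw [show (1 : WithTop ℕ∞) = 0 + 1 by simp, contDiffOn_succ_iff_deriv_of_isOpen isOpen_Ioo]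
    refine ⟨fun t ht => (hτd t ht).hasDerivAt.differentiableAt.differentiableWithinAt,
      by simp, ?_⟩
    rw [contDiffOn_zero]
    exact hc.congr fun t ht => (hτd t ht).hasDerivAt.deriv
  · intro tinv htinv s hs
    obtain ⟨ht, hts⟩ := htinv s hs
    have hinv : HasDerivAt tinv (β / ‖q (tinv s)‖)⁻¹ s := by
      have := hasDerivAt_right_inverse isOpen_Ioo hmono.injOn htinv ht (hτd _ ht) (hpos _ ht).ne'
      rwa [hts] at this
    have hqpos : 0 < ‖q (tinv s)‖ := norm_pos_iff.mpr (hq0 _ ht)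
    have hen : ‖p (tinv s)‖^2 - 2 * E = 2 * β / ‖q (tinv s)‖ := by
      rw [← hE _ ht]; ring
    constructor
    · rw [((hq _ ht).scomp s hinv).deriv]
      simp only [hF, mul_div_assoc]
      rw [moser_gradient_P, hen]
      congr 1
      field_simp
      norm_num
    · rw [((hp _ ht).scomp s hinv).deriv]
      simp only [hF, mul_div_right_comm]
      rw [moser_gradient_Q, hen, smul_neg, smul_smul]
      congr 2
      field_simp
      norm_num
end

section
/- Let α > 0, L ∈ ℝ, E ∈ ℝ, and let r : I → (0, ∞) be a C² solution of the planar radial Kepler equation r''(t) = L²/r(t)³ − α/r(t)² on an open interval I, with constant energy (1/2)(r'(t)² + L²/r(t)²) − α/r(t) = E and r(t)E + α > 0 for all t ∈ I. Fix t₀ ∈ I and let σ(t) = ∫_{t₀}^{t} (E + α/r(u)) du, a strictly increasing C¹ diffeomorphism onto its image J, and set ρ = r ∘ σ⁻¹. Then for all s ∈ J: ρ''(s) = E L² / (ρ(s)E + α)³ + α / (ρ(s)E + α)². -/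
/-!
With `f = E + α / r > 0` one has `σ' = f` on the interval, so `σ` is strictly increasing and its
inverse `tinv` has derivative `1 / f`; hence `d/ds = (1 / f) d/dt` along the motion. Writing
`D = r E + α`, this gives `ρ' = r r' / D` and
`ρ'' = (r / D³) (α r'² + r r'' D)`. Eliminating `r''` by the equation of motion and `r'²` by
conservation of energy turns the right-hand side into `(E L² + α D) / D³`.
-/

/-- A function with positive derivative on an open interval maps it onto an open set, and any
right inverse on the image is differentiable there with the reciprocal derivative. -/
lemma inverse_of_pos_deriv {a b : ℝ} {σ f : ℝ → ℝ}
    (hd : ∀ t ∈ Set.Ioo a b, HasDerivAt σ (f t) t) (hf : ∀ t ∈ Set.Ioo a b, 0 < f t) :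
    StrictMonoOn σ (Set.Ioo a b) ∧ (∀ s ∈ σ '' Set.Ioo a b, σ '' Set.Ioo a b ∈ nhds s) ∧
    ∀ tinv : ℝ → ℝ,
      (∀ s ∈ σ '' Set.Ioo a b, tinv s ∈ Set.Ioo a b ∧ σ (tinv s) = s) →
      ∀ s ∈ σ '' Set.Ioo a b, HasDerivAt tinv (f (tinv s))⁻¹ s := by
  have hcont : ContinuousOn σ (Set.Ioo a b) :=
    fun t ht => (hd t ht).continuousAt.continuousWithinAt
  have hmono : StrictMonoOn σ (Set.Ioo a b) := by
    refine strictMonoOn_of_deriv_pos (convex_Ioo a b) hcont fun t ht => ?_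
    rw [interior_Ioo] at ht
    rw [(hd t ht).deriv]
    exact hf t ht
  have hopen : ∀ s ∈ σ '' Set.Ioo a b, σ '' Set.Ioo a b ∈ nhds s := by
    rintro _ ⟨t, ht, rfl⟩
    obtain ⟨p, hap, hpt⟩ := exists_between ht.1
    obtain ⟨q, htq, hqb⟩ := exists_between ht.2
    have hp : p ∈ Set.Ioo a b := ⟨hap, hpt.trans ht.2⟩
    have hq : q ∈ Set.Ioo a b := ⟨ht.1.trans htq, hqb⟩
    have hsub : Set.Icc p q ⊆ Set.Ioo a b := Set.Icc_subset_Ioo hap hqb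
    refine Filter.mem_of_superset (Icc_mem_nhds (hmono hp ht hpt) (hmono ht hq htq)) ?_
    exact (intermediate_value_Icc (hpt.trans htq).le (hcont.mono hsub)).trans
      (Set.image_mono hsub)
  refine ⟨hmono, hopen, fun tinv hinv s hs => ?_⟩
  have htm : StrictMonoOn tinv (σ '' Set.Ioo a b) := by
    intro x hx y hy hxy
    rw [← hmono.lt_iff_lt (hinv x hx).1 (hinv y hy).1, (hinv x hx).2, (hinv y hy).2]
    exact hxy
  have himg : Set.Ioo a b ⊆ tinv '' (σ '' Set.Ioo a b) := by
    intro t ht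
    have hs' := Set.mem_image_of_mem σ ht
    exact ⟨σ t, hs', hmono.injOn (hinv _ hs').1 ht (hinv _ hs').2⟩
  have hct : ContinuousAt tinv s :=
    htm.continuousAt_of_image_mem_nhds (hopen s hs)
      (Filter.mem_of_superset (isOpen_Ioo.mem_nhds (hinv s hs).1) himg)
  refine HasDerivAt.of_local_left_inverse hct (hd _ (hinv s hs).1) (hf _ (hinv s hs).1).ne' ?_
  filter_upwards [hopen s hs] with y hy using (hinv y hy).2

/-- Radial Kepler motion becomes a Jacobi-metric geodesic: if `r` solves
`r'' = L²/r³ - α/r²` with energy `E = (1/2)(r'² + L²/r²) - α/r` and `rE + α > 0`,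
then in the Jacobi–Maupertuis time `σ(t) = ∫_{t₀}^t (E + α/r(u)) du` the
reparametrized radius `ρ = r ∘ σ⁻¹` satisfies
`ρ'' = EL²/(ρE + α)³ + α/(ρE + α)²`. -/
theorem radial_kepler_jacobi_reparametrization (α L E : ℝ) (hα : 0 < α)
    (a b : ℝ) (r : ℝ → ℝ) (hrC : ContDiffOn ℝ 2 r (Set.Ioo a b))
    (hrpos : ∀ t ∈ Set.Ioo a b, 0 < r t)
    (hode : ∀ t ∈ Set.Ioo a b, deriv (deriv r) t = L^2 / (r t)^3 - α / (r t)^2)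
    (hE : ∀ t ∈ Set.Ioo a b, (1/2) * ((deriv r t)^2 + L^2/(r t)^2) - α / r t = E)
    (hpos : ∀ t ∈ Set.Ioo a b, 0 < r t * E + α)
    (t₀ : ℝ) (ht₀ : t₀ ∈ Set.Ioo a b)
    (σ : ℝ → ℝ) (hσ : ∀ t, σ t = ∫ u in t₀..t, (E + α / r u)) :
    StrictMonoOn σ (Set.Ioo a b) ∧
    ∀ tinv : ℝ → ℝ,
      (∀ s ∈ σ '' Set.Ioo a b, tinv s ∈ Set.Ioo a b ∧ σ (tinv s) = s) →
      ∀ s ∈ σ '' Set.Ioo a b,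
        deriv (deriv (r ∘ tinv)) s
          = E * L^2 / ((r ∘ tinv) s * E + α)^3 + α / ((r ∘ tinv) s * E + α)^2 := by
  have hf : ∀ t ∈ Set.Ioo a b, 0 < E + α / r t := by
    intro t ht
    have h := div_pos (hpos t ht) (hrpos t ht)
    have hr := (hrpos t ht).ne'
    have e : (r t * E + α) / r t = E + α / r t := by field_simp
    rwa [e] at h
  have hfc : ContinuousOn (fun u => E + α / r u) (Set.Ioo a b) :=
    continuousOn_const.add
      (continuousOn_const.div hrC.continuousOn fun t ht => (hrpos t ht).ne')
  have hd : ∀ t ∈ Set.Ioo a b, HasDerivAt σ (E + α / r t) t := by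
    intro t ht
    rw [funext hσ]
    refine intervalIntegral.integral_hasDerivAt_right ?_ ?_ ?_
    · exact (hfc.mono (Set.ordConnected_Ioo.uIcc_subset ht₀ ht)).intervalIntegrable
    · exact hfc.stronglyMeasurableAtFilter isOpen_Ioo t ht
    · exact hfc.continuousAt (isOpen_Ioo.mem_nhds ht)
  have hr1 : ∀ t ∈ Set.Ioo a b, HasDerivAt r (deriv r t) t := fun t ht =>
    ((hrC.differentiableOn (by norm_num)).differentiableAt (isOpen_Ioo.mem_nhds ht)).hasDerivAt
  have hr2 : ∀ t ∈ Set.Ioo a b, HasDerivAt (deriv r) (deriv (deriv r) t) t := fun t ht =>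
    (((hrC.deriv_of_isOpen (m := 1) isOpen_Ioo (by norm_num)).differentiableOn
      (by norm_num)).differentiableAt (isOpen_Ioo.mem_nhds ht)).hasDerivAt
  obtain ⟨hmono, hopen, hder⟩ := inverse_of_pos_deriv hd hf
  refine ⟨hmono, fun tinv hinv s hs => ?_⟩
  -- `ρ' = r r' / D` on the whole image, hence near `s`.
  have hρ : deriv (r ∘ tinv) =ᶠ[nhds s]
      (fun t => r t * deriv r t / (r t * E + α)) ∘ tinv := by
    filter_upwards [hopen s hs] with y hy
    have ht := (hinv y hy).1
    rw [((hr1 _ ht).comp y (hder tinv hinv y hy)).deriv]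
    have h1 := (hrpos _ ht).ne'
    have h2 := (hpos _ ht).ne'
    have e : E + α / r (tinv y) = (r (tinv y) * E + α) / r (tinv y) := by field_simp
    simp only [Function.comp_apply]
    rw [e, inv_div]
    ring
  rw [hρ.deriv_eq]
  have ht := (hinv s hs).1
  have hD := hpos _ ht
  have hG := (((hr1 _ ht).mul (hr2 _ ht)).div (((hr1 _ ht).mul_const E).add_const α)
    hD.ne').comp s (hder tinv hinv s hs)
  refine hG.deriv.trans ?_
  have hR := hrpos _ ht
  have h1 := hode _ ht
  have h2 := hE _ ht
  have e : E + α / r (tinv s) = (r (tinv s) * E + α) / r (tinv s) := by field_simp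
  simp only [Function.comp_apply, Pi.mul_apply]
  rw [e, inv_div, h1]
  generalize r (tinv s) = R at *
  generalize deriv r (tinv s) = v at *
  -- Conservation of energy, solved for `v²`.
  have hv : v ^ 2 = 2 * E + 2 * α / R - L ^ 2 / R ^ 2 := by
    linear_combination 2 * h2
  have hR' := hR.ne'
  have hD' := hD.ne'
  have key : (v * v + R * (L ^ 2 / R ^ 3 - α / R ^ 2)) * (R * E + α) - R * v * (v * E)
      = (E * L ^ 2 + α * (R * E + α)) / R := by
    have : (v * v + R * (L ^ 2 / R ^ 3 - α / R ^ 2)) * (R * E + α) - R * v * (v * E)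
      = v ^ 2 * α + R * (L ^ 2 / R ^ 3 - α / R ^ 2) * (R * E + α) := by ring
    rw [this, hv]
    field_simp
    ring
  rw [key]
  generalize R * E + α = D at *
  field_simp
end

section
/- Let α > 0, E ∈ ℝ, and let x : I → ℝ³∖{0} be a C² solution of the Kepler equation x''(t) = −α x(t)/|x(t)|³ with constant energy (1/2)|x'(t)|² − α/|x(t)| = E on an open interval I, and suppose x'(t) ≠ 0 for all t ∈ I. With the Levi-Civita parameter σ (dσ/dt = 1/|x|), let p(σ) = x'(t(σ)) and define the inverted momentum w(σ) = p(σ)/|p(σ)|². Then for all σ: |dw/dσ| = 1/2 − E|w(σ)|². Equivalently, 4|w'|² = (2E|w|² − 1)², so the momentum curve written in the coordinate w is parametrized proportionally to arclength of the constant-curvature metric 4(1 + (−2E)|w|²)⁻²|dw|². -/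
/-!
Inversion `p ↦ p/|p|²` is conformal with factor `1/|p|²` (its derivative is a scaled reflection), so
the Kepler equation gives `|dw/dt| = |p'|/|p|² = α/(|x|²|p|²)`. Since `dt/dσ = |x|`, it follows that
`|dw/dσ| = α/(|x||p|²)`, and energy conservation `α/|x| = |p|²/2 - E` turns this into `1/2 - E/|p|²`.
The parameter change `tinv` is only assumed to be a right inverse of `σ`; its differentiability
follows from the strict monotonicity of `σ` and the inverse function theorem.
-/

/-- The derivative of a curve under inversion in the unit sphere is rescaled by `1/|p|²` and
reflected, which determines its norm. -/
lemma exists_hasDerivAt_inverted {F : Type*} [NormedAddCommGroup F] [InnerProductSpace ℝ F]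
    {p : ℝ → F} {p' : F} {t : ℝ} (hp : HasDerivAt p p' t) (h0 : p t ≠ 0) :
    ∃ v, HasDerivAt (fun s => (1 / ‖p s‖ ^ 2) • p s) v t ∧ ‖v‖ = ‖p'‖ / ‖p t‖ ^ 2 := by
  have h := (EuclideanGeometry.hasFDerivAt_inversion (R := 1) h0).comp_hasDerivAt t hp
  refine ⟨_, h.congr_of_eventuallyEq (Filter.Eventually.of_forall fun s => ?_), ?_⟩
  · simp [EuclideanGeometry.inversion]
  · simp [norm_smul]
    ring

/-- A right inverse on `σ '' s` of a strictly increasing function is differentiable wherever the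
function has a nonzero strict derivative. -/
lemma hasDerivAt_of_rightInverse_strictMonoOn {σ τ : ℝ → ℝ} {s : Set ℝ} (hs : IsOpen s)
    (hmono : StrictMonoOn σ s) (hτ : ∀ y ∈ σ '' s, τ y ∈ s ∧ σ (τ y) = y) {y c : ℝ}
    (hy : y ∈ σ '' s) (hc : c ≠ 0) (hd : HasStrictDerivAt σ c (τ y)) :
    HasDerivAt τ c⁻¹ y := by
  have hnhds : σ '' s ∈ nhds y := by
    have h := Filter.image_mem_map (m := σ) (hs.mem_nhds (hτ y hy).1)
    rwa [hd.map_nhds_eq hc, (hτ y hy).2] at h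
  have hτmono : StrictMonoOn τ (σ '' s) := by
    intro y₁ h₁ y₂ h₂ h
    rw [← hmono.lt_iff_lt (hτ y₁ h₁).1 (hτ y₂ h₂).1, (hτ y₁ h₁).2, (hτ y₂ h₂).2]
    exact h
  have himage : s ⊆ τ '' (σ '' s) := by
    intro t ht
    have h := hτ (σ t) ⟨t, ht, rfl⟩
    exact ⟨σ t, ⟨t, ht, rfl⟩, hmono.injOn h.1 ht h.2⟩
  have hcont : ContinuousAt τ y := hτmono.continuousAt_of_image_mem_nhds hnhds
    (Filter.mem_of_superset (hs.mem_nhds (hτ y hy).1) himage)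
  exact HasDerivAt.of_local_left_inverse hcont hd.hasDerivAt hc
    (Filter.mem_of_superset hnhds fun z hz => (hτ z hz).2)

/-- **Milnor's inverted-momentum identity.** For a Kepler orbit of energy `E` in
Levi-Civita time `σ`, the inverted momentum `w = p/|p|²` of the momentum curve
`p(σ) = x'(t(σ))` satisfies `|dw/dσ| = 1/2 - E|w|²`, equivalently
`4|w'|² = (2E|w|² - 1)²`. -/
theorem milnor_inverted_momentum_speed (α E : ℝ) (hα : 0 < α) (a b : ℝ)
    (x : ℝ → EuclideanSpace ℝ (Fin 3))
    (hx0 : ∀ t ∈ Set.Ioo a b, x t ≠ 0)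
    (hxC : ContDiffOn ℝ 2 x (Set.Ioo a b))
    (hode : ∀ t ∈ Set.Ioo a b,
      deriv (deriv x) t = -((α / ‖x t‖^3) • x t))
    (hE : ∀ t ∈ Set.Ioo a b, (1/2) * ‖deriv x t‖^2 - α / ‖x t‖ = E)
    (hp0 : ∀ t ∈ Set.Ioo a b, deriv x t ≠ 0)
    (t₀ : ℝ) (ht₀ : t₀ ∈ Set.Ioo a b)
    (σ : ℝ → ℝ) (hσ : ∀ t, σ t = ∫ u in t₀..t, 1 / ‖x u‖)
    (w : ℝ → EuclideanSpace ℝ (Fin 3))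
    (hw : ∀ s, w s = (1 / ‖deriv x s‖^2) • deriv x s) :
    StrictMonoOn σ (Set.Ioo a b) ∧
    ∀ tinv : ℝ → ℝ,
      (∀ s ∈ σ '' Set.Ioo a b, tinv s ∈ Set.Ioo a b ∧ σ (tinv s) = s) →
      ∀ s ∈ σ '' Set.Ioo a b,
        ‖deriv (w ∘ tinv) s‖ = 1/2 - E * ‖(w ∘ tinv) s‖^2 ∧
        4 * ‖deriv (w ∘ tinv) s‖^2 = (2 * E * ‖(w ∘ tinv) s‖^2 - 1)^2 := by
  have hcont : ContinuousOn (fun u => 1 / ‖x u‖) (Set.Ioo a b) :=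
    continuousOn_const.div hxC.continuousOn.norm fun t ht => norm_ne_zero_iff.2 (hx0 t ht)
  have hσd : ∀ t ∈ Set.Ioo a b, HasStrictDerivAt σ (1 / ‖x t‖) t := by
    intro t ht
    rw [funext hσ]
    refine intervalIntegral.integral_hasStrictDerivAt_right
      (hcont.mono (Set.ordConnected_Ioo.uIcc_subset ht₀ ht)).intervalIntegrable
      (hcont.stronglyMeasurableAtFilter isOpen_Ioo t ht)
      (hcont.continuousAt (isOpen_Ioo.mem_nhds ht))
  have hmono : StrictMonoOn σ (Set.Ioo a b) := by
    refine strictMonoOn_of_deriv_pos (convex_Ioo a b)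
      (fun t ht => (hσd t ht).hasDerivAt.continuousAt.continuousWithinAt) fun t ht => ?_
    rw [interior_Ioo] at ht
    rw [(hσd t ht).hasDerivAt.deriv]
    exact one_div_pos.2 (norm_pos_iff.2 (hx0 t ht))
  refine ⟨hmono, fun tinv htinv s hs => ?_⟩
  have ht := (htinv s hs).1
  have hxpos : 0 < ‖x (tinv s)‖ := norm_pos_iff.2 (hx0 _ ht)
  have hppos : 0 < ‖deriv x (tinv s)‖ := norm_pos_iff.2 (hp0 _ ht)
  have hτd := hasDerivAt_of_rightInverse_strictMonoOn isOpen_Ioo hmono htinv hs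
    (one_div_pos.2 hxpos).ne' (hσd _ ht)
  have hpd : HasDerivAt (deriv x) (deriv (deriv x) (tinv s)) (tinv s) := by
    have h : ContDiffOn ℝ 1 (deriv x) (Set.Ioo a b) :=
      hxC.deriv_of_isOpen isOpen_Ioo (by norm_num)
    exact ((h.differentiableOn one_ne_zero).differentiableAt
      (isOpen_Ioo.mem_nhds ht)).hasDerivAt
  obtain ⟨v, hv, hvnorm⟩ := exists_hasDerivAt_inverted hpd (hp0 _ ht)
  rw [← funext hw] at hv
  have hspeed : ‖deriv (w ∘ tinv) s‖ = 1/2 - E * ‖(w ∘ tinv) s‖^2 := by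
    rw [(hv.scomp s hτd).deriv, norm_smul, hvnorm, hode _ ht, Function.comp_apply, hw, ← hE _ ht,
      norm_neg, norm_smul, norm_smul]
    simp only [one_div, inv_inv, norm_norm, norm_div, norm_pow, norm_inv, Real.norm_of_nonneg hα.le]
    field_simp
    ring
  refine ⟨hspeed, ?_⟩
  rw [hspeed]
  ring
end

section
/- Let n ≥ 1, k ∈ ℝ, x ∈ ℝⁿ∖{0} and v ∈ ℝⁿ. Let I(x) = x/|x|² be the inversion and DI(x)v = v/|x|² − 2⟨x, v⟩x/|x|⁴ its derivative at x in direction v. Then 4(1 + k|I(x)|²)⁻² |DI(x)v|² = 4(k + |x|²)⁻² |v|². That is, the inversion I is an isometry from the conformally flat metric 4(k + |x|²)⁻²δ_{ij} to the conformally flat metric 4(1 + k|x|²)⁻²δ_{ij} (away from the origin). -/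
/-!
The inversion is conformal with `|DI(x)v|² = |v|²/|x|⁴` (`hD`), because `|x|² DI(x)` is the
reflection in the hyperplane orthogonal to `x`. Since `|I(x)| = 1/|x|`, also
`1 + k|I(x)|² = (k + |x|²)/|x|²` (`hI`), and the two factors `|x|⁴` cancel.
-/

open scoped RealInnerProductSpace

/-- The inversion `I(x) = x/|x|²`, with differential `DI(x)v = v/|x|² - 2⟨x,v⟩x/|x|⁴`,
is an isometry from the conformally flat metric `4(k + |x|²)⁻²δᵢⱼ` to the
conformally flat metric `4(1 + k|x|²)⁻²δᵢⱼ` away from the origin: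
`4(1 + k|I(x)|²)⁻²|DI(x)v|² = 4(k + |x|²)⁻²|v|²`. -/
theorem inversion_isometry_conformal_metrics {n : ℕ} (hn : 1 ≤ n) (k : ℝ)
    (x v : EuclideanSpace ℝ (Fin n)) (hx : x ≠ 0) :
    4 / (1 + k * ‖(1 / ‖x‖^2) • x‖^2)^2 *
        ‖(1 / ‖x‖^2) • v - (2 * ⟪x, v⟫ / ‖x‖^4) • x‖^2
      = 4 / (k + ‖x‖^2)^2 * ‖v‖^2 := by
  have hr : ‖x‖ ≠ 0 := norm_ne_zero_iff.mpr hx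
  have hI : 1 + k * ‖(1 / ‖x‖^2) • x‖^2 = (k + ‖x‖^2) / ‖x‖^2 := by
    rw [norm_smul, mul_pow, Real.norm_eq_abs, sq_abs]
    field_simp
    ring
  -- Conformality of the inversion: the cross term and the square of the radial term cancel.
  have hD : ‖(1 / ‖x‖^2) • v - (2 * ⟪x, v⟫ / ‖x‖^4) • x‖^2 = ‖v‖^2 / ‖x‖^4 := by
    rw [norm_sub_sq_real, norm_smul, norm_smul, mul_pow, mul_pow, Real.norm_eq_abs,
      Real.norm_eq_abs, sq_abs, sq_abs, real_inner_smul_left, real_inner_smul_right,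
      real_inner_comm x v]
    field_simp
    ring
  rw [hI, hD]
  -- On the sphere `‖x‖² = -k` both conformal factors are `4 / 0 = 0`.
  by_cases hk : k + ‖x‖^2 = 0
  · simp [hk]
  · field_simp
end

section
/- Let E ∈ ℝ and define on ℝ³ × ℝ³ the Hamiltonian H̃(x, p) = (E − |x|²/2)² |p|², and set Λ(x) = E − |x|²/2. Let (x, p) : I → ℝ³ × ℝ³ be a C¹ solution of Hamilton's equations x'(t) = ∇_p H̃(x(t), p(t)) = 2Λ(x(t))² p(t) and p'(t) = −∇_x H̃(x(t), p(t)) = 2Λ(x(t)) |p(t)|² x(t) on an open interval I with Λ(x(t)) ≠ 0 for all t. Then the position satisfies the second-order equation x''(t) = −(2⟨x(t), x'(t)⟩/Λ(x(t))) x'(t) + 4 Λ(x(t)) H̃(x(t), p(t)) x(t) for all t ∈ I. -/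
/-!
Where `x` and `p` are differentiable the equation is the product rule applied to `x' = 2Λ²p`,
using `Λ' = -⟨x, x'⟩` and `p' = 2Λ|p|²x`. Hamilton's equations are given through `deriv`, which is
`0` at points of non-differentiability, so those points have to be treated as well.

* If `p t ≠ 0`, then `x' t ≠ 0`, so `x` is differentiable at `t`. If `p` is not, then `deriv p t = 0`
  forces `x t = 0`; moreover `x' = 2Λ²p` is not differentiable either, and both sides vanish.
* If `p t = 0`, the right side vanishes, and `deriv (deriv x) t = 0` has to be shown
  (`no_nonzero_acceleration`). If `x'` had a nonzero derivative `w` at `t`, then `⟨x', w⟩ > 0` just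
  to the right of `t`, so that `x` and `p` would be differentiable and solve Hamilton's equations
  there. The energy `c = Λ²|p|²` is conserved and positive, whence `|x'|² = 4cΛ²` and `Λ → 0` at
  `t`. But `(Λ²)' ≤ KΛ²` for a constant `K`, so `Λ²` stays bounded away from `0`, a contradiction.
-/

open scoped RealInnerProductSpace

lemma hasDerivAt_lam {E : ℝ} {x : ℝ → EuclideanSpace ℝ (Fin 3)} {x' : EuclideanSpace ℝ (Fin 3)} {t : ℝ}
    (hx : HasDerivAt x x' t) :
    HasDerivAt (fun s => E - ‖x s‖ ^ 2 / 2) (-⟪x t, x'⟫) t := by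
  have h := (hx.norm_sq.div_const 2).const_sub E
  exact h.congr_deriv (by ring)

/-- A genuine solution of Hamilton's equations on an interval `(t₀, t₁)` with `p ≠ 0` cannot have
its velocity tend to `0` at `t₀`. -/
lemma velocity_not_tendsto_zero {E t₀ t₁ : ℝ} (ht : t₀ < t₁) {x p : ℝ → EuclideanSpace ℝ (Fin 3)}
    (hx : ∀ s ∈ Set.Ioo t₀ t₁, HasDerivAt x ((2 * (E - ‖x s‖ ^ 2 / 2) ^ 2) • p s) s)
    (hp : ∀ s ∈ Set.Ioo t₀ t₁,
      HasDerivAt p ((2 * (E - ‖x s‖ ^ 2 / 2) * ‖p s‖ ^ 2) • x s) s)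
    (hL : ∀ s ∈ Set.Ioo t₀ t₁, E - ‖x s‖ ^ 2 / 2 ≠ 0)
    (hp0 : ∀ s ∈ Set.Ioo t₀ t₁, p s ≠ 0)
    (hb : ∀ s ∈ Set.Ioo t₀ t₁, ‖(2 * (E - ‖x s‖ ^ 2 / 2) ^ 2) • p s‖ ^ 2 ≤ 1)
    (hlim : Filter.Tendsto (fun s => ‖(2 * (E - ‖x s‖ ^ 2 / 2) ^ 2) • p s‖ ^ 2)
      (nhdsWithin t₀ (Set.Ioi t₀)) (nhds 0)) : False := by
  set L : ℝ → ℝ := fun s => E - ‖x s‖ ^ 2 / 2 with hLdef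
  have hL' : ∀ s ∈ Set.Ioo t₀ t₁, HasDerivAt L (-(2 * L s ^ 2 * ⟪x s, p s⟫)) s := by
    intro s hs
    have h := hasDerivAt_lam (E := E) (hx s hs)
    rwa [real_inner_smul_right] at h
  have hH' : ∀ s ∈ Set.Ioo t₀ t₁, HasDerivAt (fun s => L s ^ 2 * ‖p s‖ ^ 2) 0 s := by
    intro s hs
    have h := ((hL' s hs).pow 2).mul (hp s hs).norm_sq
    refine HasDerivAt.congr_deriv h ?_
    rw [real_inner_smul_right, real_inner_comm (x s) (p s)]
    simp only [Pi.pow_apply, hLdef]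
    push_cast
    ring
  obtain ⟨m, hm⟩ : (Set.Ioo t₀ t₁).Nonempty := Set.nonempty_Ioo.2 ht
  obtain ⟨c, hcdef⟩ : ∃ c, c = L m ^ 2 * ‖p m‖ ^ 2 := ⟨_, rfl⟩
  have hc : ∀ s ∈ Set.Ioo t₀ t₁, L s ^ 2 * ‖p s‖ ^ 2 = c := by
    intro s hs
    rw [hcdef]
    exact isOpen_Ioo.is_const_of_deriv_eq_zero isPreconnected_Ioo
      (fun u hu => (hH' u hu).differentiableAt.differentiableWithinAt)
      (fun u hu => (hH' u hu).deriv) hs hm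
  have hcpos : 0 < c := by
    rw [hcdef]
    have h1 := hL m hm
    have h2 := norm_pos_iff.2 (hp0 m hm)
    positivity
  have hspeed : ∀ s ∈ Set.Ioo t₀ t₁, ‖(2 * L s ^ 2) • p s‖ ^ 2 = 4 * c * L s ^ 2 := by
    intro s hs
    rw [← hc s hs, norm_smul, mul_pow, Real.norm_eq_abs, sq_abs]
    ring
  -- `-4Λ⟨x, p⟩ ≤ 2(Λ²|p|² + |x|²)`, and `|x|² = 2(E - Λ)` is bounded because `4cΛ² ≤ 1`.
  set K : ℝ := 2 * (c + 2 * |E| + 1 + 1 / (4 * c)) with hK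
  have hKbound : ∀ s ∈ Set.Ioo t₀ t₁, -(4 * L s * ⟪x s, p s⟫) ≤ K := by
    intro s hs
    have h1 : L s ^ 2 ≤ 1 / (4 * c) := by
      rw [le_div_iff₀ (by positivity)]
      have := hb s hs
      have h2 := hspeed s hs
      simp only [hLdef] at h2 ⊢
      linarith
    have h3 : |L s * ⟪x s, p s⟫| ≤ |L s| * (‖x s‖ * ‖p s‖) := by
      rw [abs_mul]
      exact mul_le_mul_of_nonneg_left (abs_real_inner_le_norm _ _) (abs_nonneg _)
    have h4 := neg_abs_le (L s * ⟪x s, p s⟫)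
    have h5 : (|L s| * ‖p s‖) ^ 2 = c := by rw [mul_pow, sq_abs, hc s hs]
    have h6 : ‖x s‖ ^ 2 = 2 * (E - L s) := by simp only [hLdef]; ring
    have h7 := sq_nonneg (|L s| * ‖p s‖ - ‖x s‖)
    have h8 := sq_nonneg (L s + 1)
    have h9 := le_abs_self E
    rw [hK]
    nlinarith
  have hq : ∀ s ∈ Set.Ioo t₀ t₁, HasDerivAt (fun s => L s ^ 2 * Real.exp (-K * s))
      ((-(4 * L s * ⟪x s, p s⟫) - K) * (L s ^ 2 * Real.exp (-K * s))) s := by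
    intro s hs
    have h := ((hL' s hs).pow 2).mul (((hasDerivAt_id s).const_mul (-K)).exp)
    refine HasDerivAt.congr_deriv h ?_
    simp only [Pi.pow_apply, id]
    push_cast
    ring
  have hanti : AntitoneOn (fun s => L s ^ 2 * Real.exp (-K * s)) (Set.Ioo t₀ t₁) := by
    apply antitoneOn_of_deriv_nonpos (convex_Ioo _ _)
    · exact fun s hs => (hq s hs).continuousAt.continuousWithinAt
    · rw [interior_Ioo]
      exact fun s hs => (hq s hs).differentiableAt.differentiableWithinAt
    · rw [interior_Ioo]
      intro s hs
      rw [(hq s hs).deriv]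
      exact mul_nonpos_of_nonpos_of_nonneg (by linarith [hKbound s hs]) (by positivity)
  have hev : ∀ᶠ s in nhdsWithin t₀ (Set.Ioi t₀), s ∈ Set.Ioo t₀ m := Ioo_mem_nhdsGT hm.1
  have hlim2 : Filter.Tendsto (fun s => ‖(2 * L s ^ 2) • p s‖ ^ 2 * Real.exp (-K * s))
      (nhdsWithin t₀ (Set.Ioi t₀)) (nhds (0 * Real.exp (-K * t₀))) := by
    refine hlim.mul (Filter.Tendsto.mono_left ?_ nhdsWithin_le_nhds)
    exact (by fun_prop : Continuous fun s : ℝ => Real.exp (-K * s)).tendsto t₀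
  have hle : 4 * c * (L m ^ 2 * Real.exp (-K * m)) ≤ 0 * Real.exp (-K * t₀) := by
    refine ge_of_tendsto hlim2 ?_
    filter_upwards [hev] with s hs
    have hs' : s ∈ Set.Ioo t₀ t₁ := ⟨hs.1, hs.2.trans hm.2⟩
    rw [hspeed s hs', mul_assoc (4 * c)]
    exact mul_le_mul_of_nonneg_left (hanti hs' hm hs.2.le) (by positivity)
  have hLm := hL m hm
  have : 0 < 4 * c * (L m ^ 2 * Real.exp (-K * m)) := by
    have : L m ≠ 0 := hLm
    positivity
  linarith

/-- At a point where the momentum, hence the velocity, vanishes, the velocity cannot have a nonzero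
derivative, even if `x` and `p` are not assumed differentiable. -/
lemma no_nonzero_acceleration {E a b t₀ : ℝ} {x p : ℝ → EuclideanSpace ℝ (Fin 3)}
    (hx' : ∀ t ∈ Set.Ioo a b, deriv x t = (2 * (E - ‖x t‖ ^ 2 / 2) ^ 2) • p t)
    (hp' : ∀ t ∈ Set.Ioo a b, deriv p t = (2 * (E - ‖x t‖ ^ 2 / 2) * ‖p t‖ ^ 2) • x t)
    (hL : ∀ t ∈ Set.Ioo a b, E - ‖x t‖ ^ 2 / 2 ≠ 0)
    (ht : t₀ ∈ Set.Ioo a b) (hp0 : p t₀ = 0) : deriv (deriv x) t₀ = 0 := by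
  by_contra hw
  set w := deriv (deriv x) t₀ with hwdef
  have hd : HasDerivAt (deriv x) w t₀ := (differentiableAt_of_deriv_ne_zero hw).hasDerivAt
  have hv0 : deriv x t₀ = 0 := by rw [hx' t₀ ht, hp0, smul_zero]
  have hwpos : 0 < ⟪w, w⟫ := real_inner_self_pos.2 hw
  have hφ : HasDerivAt (fun s => ⟪deriv x s, w⟫) ⟪w, w⟫ t₀ := by
    simpa using hd.inner ℝ (hasDerivAt_const t₀ w)
  have hpos : ∀ᶠ s in nhdsWithin t₀ (Set.Ioi t₀), 0 < ⟪deriv x s, w⟫ := by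
    have h1 := (hasDerivAt_iff_tendsto_slope.1 hφ).eventually (lt_mem_nhds hwpos)
    have h2 : nhdsWithin t₀ (Set.Ioi t₀) ≤ nhdsWithin t₀ {t₀}ᶜ :=
      nhdsWithin_mono _ fun s hs => ne_of_gt hs
    filter_upwards [h2 h1, self_mem_nhdsWithin] with s hs hst
    have hst' : t₀ < s := hst
    simp only [slope_def_field, hv0, inner_zero_left, sub_zero] at hs
    exact (div_pos_iff_of_pos_right (sub_pos.2 hst')).1 hs
  have hlim : Filter.Tendsto (fun s => ‖deriv x s‖ ^ 2) (nhdsWithin t₀ (Set.Ioi t₀)) (nhds 0) := by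
    have h : Filter.Tendsto (fun s => ‖deriv x s‖ ^ 2) (nhds t₀) (nhds (‖deriv x t₀‖ ^ 2)) :=
      hd.continuousAt.tendsto.norm.pow 2
    rw [hv0, norm_zero, zero_pow two_ne_zero] at h
    exact h.mono_left nhdsWithin_le_nhds
  have hsmall := hlim.eventually (ge_mem_nhds (zero_lt_one (α := ℝ)))
  have hab : ∀ᶠ s in nhdsWithin t₀ (Set.Ioi t₀), s ∈ Set.Ioo a b :=
    nhdsWithin_le_nhds (isOpen_Ioo.mem_nhds ht)
  obtain ⟨u, hu, hU⟩ := mem_nhdsGT_iff_exists_Ioo_subset.1 ((hpos.and hsmall).and hab)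
  have hxd : ∀ s ∈ Set.Ioo t₀ u, HasDerivAt x (deriv x s) s := by
    intro s hs
    refine (differentiableAt_of_deriv_ne_zero fun h => ?_).hasDerivAt
    have := (hU hs).1.1
    simp [h] at this
  have hg : ∀ s ∈ Set.Ioo t₀ u, HasDerivAt (fun s => ⟪x s, w⟫) ⟪deriv x s, w⟫ s := by
    intro s hs
    simpa using (hxd s hs).inner ℝ (hasDerivAt_const s w)
  have hmono : StrictMonoOn (fun s => ⟪x s, w⟫) (Set.Ioo t₀ u) := by
    apply strictMonoOn_of_deriv_pos (convex_Ioo _ _)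
    · exact fun s hs => (hg s hs).continuousAt.continuousWithinAt
    · rw [interior_Ioo]
      intro s hs
      rw [(hg s hs).deriv]
      exact (hU hs).1.1
  -- `⟨x, w⟩` has at most one zero, so after shrinking the interval `x` has none.
  obtain ⟨t₁, ht₁, ht₁u, hx0⟩ : ∃ t₁, t₀ < t₁ ∧ t₁ ≤ u ∧ ∀ s ∈ Set.Ioo t₀ t₁, x s ≠ 0 := by
    by_cases h : ∃ z ∈ Set.Ioo t₀ u, x z = 0
    · obtain ⟨z, hz, hxz⟩ := h
      refine ⟨z, hz.1, hz.2.le, fun s hs hxs => ?_⟩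
      have := hmono ⟨hs.1, hs.2.trans hz.2⟩ hz hs.2
      simp [hxz, hxs] at this
    · push Not at h
      exact ⟨u, hu, le_rfl, h⟩
  have hsub : ∀ s ∈ Set.Ioo t₀ t₁, s ∈ Set.Ioo t₀ u := fun s hs => ⟨hs.1, hs.2.trans_le ht₁u⟩
  have hpne : ∀ s ∈ Set.Ioo t₀ t₁, p s ≠ 0 := by
    intro s hs h
    have h1 := (hU (hsub s hs)).1.1
    rw [hx' s (hU (hsub s hs)).2, h] at h1
    simp at h1
  refine velocity_not_tendsto_zero (E := E) ht₁ (x := x) (p := p) ?_ ?_ ?_ hpne ?_ ?_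
  · intro s hs
    rw [← hx' s (hU (hsub s hs)).2]
    exact hxd s (hsub s hs)
  · intro s hs
    have hs' := (hU (hsub s hs)).2
    rw [← hp' s hs']
    refine (differentiableAt_of_deriv_ne_zero ?_).hasDerivAt
    rw [hp' s hs']
    have h1 := hL s hs'
    have h2 := norm_ne_zero_iff.2 (hpne s hs)
    exact smul_ne_zero (mul_ne_zero (mul_ne_zero two_ne_zero h1) (pow_ne_zero 2 h2)) (hx0 s hs)
  · exact fun s hs => hL s (hU (hsub s hs)).2
  · intro s hs
    rw [← hx' s (hU (hsub s hs)).2]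
    exact (hU (hsub s hs)).1.2
  · refine hlim.congr' ?_
    filter_upwards [hab] with s hs
    rw [hx' s hs]

/-- For the momentum-space Kepler Hamiltonian `H̃(x,p) = (E - |x|²/2)²|p|²` with
`Λ(x) = E - |x|²/2`, any solution of Hamilton's equations
`x' = 2Λ²p`, `p' = 2Λ|p|²x` (with `Λ(x) ≠ 0`) satisfies the second-order equation
`x'' = -(2⟨x, x'⟩/Λ)x' + 4ΛH̃x`. -/
theorem houri_second_order_equation (E : ℝ) (a b : ℝ)
    (x p : ℝ → EuclideanSpace ℝ (Fin 3))
    (Λ : EuclideanSpace ℝ (Fin 3) → ℝ) (hΛ : ∀ v, Λ v = E - ‖v‖^2 / 2)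
    (Htil : EuclideanSpace ℝ (Fin 3) → EuclideanSpace ℝ (Fin 3) → ℝ)
    (hHtil : ∀ X P, Htil X P = (E - ‖X‖^2 / 2)^2 * ‖P‖^2)
    (hx' : ∀ t ∈ Set.Ioo a b, deriv x t = (2 * (Λ (x t))^2) • p t)
    (hp' : ∀ t ∈ Set.Ioo a b, deriv p t = (2 * Λ (x t) * ‖p t‖^2) • x t)
    (hΛ0 : ∀ t ∈ Set.Ioo a b, Λ (x t) ≠ 0) :
    ∀ t ∈ Set.Ioo a b,
      deriv (deriv x) t =
        -((2 * ⟪x t, deriv x t⟫ / Λ (x t)) • deriv x t)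
          + (4 * Λ (x t) * Htil (x t) (p t)) • x t := by
  obtain rfl : Λ = fun v => E - ‖v‖ ^ 2 / 2 := funext hΛ
  intro t ht
  simp only at hx' hp' hΛ0
  rw [hHtil]
  by_cases hpt : p t = 0
  · rw [no_nonzero_acceleration hx' hp' hΛ0 ht hpt, hx' t ht, hpt]
    simp
  have hL := hΛ0 t ht
  have hvne : deriv x t ≠ 0 := by
    rw [hx' t ht]
    exact smul_ne_zero (mul_ne_zero two_ne_zero (pow_ne_zero 2 hL)) hpt
  have hxd : HasDerivAt x (deriv x t) t := (differentiableAt_of_deriv_ne_zero hvne).hasDerivAt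
  have hcoef := ((hasDerivAt_lam (E := E) hxd).pow 2).const_mul 2
  have heq : deriv x =ᶠ[nhds t] fun s => (2 * (E - ‖x s‖ ^ 2 / 2) ^ 2) • p s := by
    filter_upwards [isOpen_Ioo.mem_nhds ht] with s hs using hx' s hs
  by_cases hpd : DifferentiableAt ℝ p t
  · have hpd' := hpd.hasDerivAt
    rw [hp' t ht] at hpd'
    have h : HasDerivAt (deriv x) _ t := (hcoef.smul hpd').congr_of_eventuallyEq heq
    rw [h.deriv, hx' t ht, real_inner_smul_right]
    simp only [Pi.pow_apply, smul_smul]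
    rw [add_comm, ← neg_smul]
    congr 2
    · push_cast
      field_simp
    · ring
  · have hxt : x t = 0 := by
      have h := hp' t ht
      rw [deriv_zero_of_not_differentiableAt hpd] at h
      have h2 := norm_ne_zero_iff.2 hpt
      exact (smul_eq_zero.1 h.symm).resolve_left
        (mul_ne_zero (mul_ne_zero two_ne_zero hL) (pow_ne_zero 2 h2))
    -- `p = (2Λ²)⁻¹ x'` near `t`, so differentiability of `x'` would pass to `p`.
    have hnd : ¬ DifferentiableAt ℝ (deriv x) t := by
      intro h
      apply hpd
      have hc : DifferentiableAt ℝ (fun s => (2 * (E - ‖x s‖ ^ 2 / 2) ^ 2)⁻¹) t :=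
        DifferentiableAt.fun_inv hcoef.differentiableAt
          (mul_ne_zero two_ne_zero (pow_ne_zero 2 hL))
      refine (hc.smul h).congr_of_eventuallyEq ?_
      filter_upwards [isOpen_Ioo.mem_nhds ht] with s hs
      simp only [Pi.smul_apply', hx' s hs]
      rw [inv_smul_smul₀ (mul_ne_zero two_ne_zero (pow_ne_zero 2 (hΛ0 s hs)))]
    rw [deriv_zero_of_not_differentiableAt hnd, hxt]
    simp
end

section
/- Let μ > 0, ε > 0, and let x : I → ℝ³∖{0} be a C² solution of the Kepler equation x''(t) = −μ x(t)/|x(t)|³ on an open interval I, with constant negative energy (1/2)|x'(t)|² − μ/|x(t)| = E = −ε²/2 for all t ∈ I. Fix t₀ ∈ I and define the eccentric anomaly parameter s(t) = ∫_{t₀}^{t} ε/|x(u)| du, a strictly increasing C¹ diffeomorphism onto its image J, and set X(s) = x(t(s)). Let A(s) = (1/μ)(2E + μ/|X(s)|) X(s) − (1/μ) ⟨X(s), x'(t(s))⟩ x'(t(s)) be the Laplace–Runge–Lenz vector along the orbit. Then for all s ∈ J: d²X/ds² + X(s) = −(μ/ε²) A(s). (In particular, since A is constant along Kepler orbits, X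 satisfies a shifted harmonic oscillator equation in the eccentric anomaly.) -/
open scoped RealInnerProductSpace

/-!
With `r = ‖x‖`, the parameter satisfies `ds/dt = ε / r > 0`, so `s` is strictly increasing and any
right inverse `tinv` on the image has derivative `r / ε` (`hasDerivAt_of_rightInverse`). Hence
`X' = (r / ε) x'`, and since `dr/dt = ⟪x, x'⟫ / r`, the equation of motion gives
`X'' = (r / ε) ((⟪x, x'⟫ / (ε r)) x' + (r / ε) x'') = ε⁻² (⟪x, x'⟫ x' - (μ / r) x)`.
Adding `X` yields exactly `-(μ / ε²) A`.
-/

/-- A right inverse, on the image of an open interval, of a strictly increasing function with nonzero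
strict derivatives is differentiable, with the reciprocal derivative, and the image is a
neighbourhood of each of its points. No continuity of the inverse
is assumed: it follows from monotonicity. -/
theorem hasDerivAt_of_rightInverse {a b : ℝ} {s s' tinv : ℝ → ℝ}
    (hmono : StrictMonoOn s (Set.Ioo a b))
    (hder : ∀ t ∈ Set.Ioo a b, HasStrictDerivAt s (s' t) t)
    (hne : ∀ t ∈ Set.Ioo a b, s' t ≠ 0)
    (hinv : ∀ τ ∈ s '' Set.Ioo a b, tinv τ ∈ Set.Ioo a b ∧ s (tinv τ) = τ)
    {τ : ℝ} (hτ : τ ∈ s '' Set.Ioo a b) :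
    s '' Set.Ioo a b ∈ nhds τ ∧ HasDerivAt tinv (s' (tinv τ))⁻¹ τ := by
  obtain ⟨hI, hsτ⟩ := hinv τ hτ
  have hJ : s '' Set.Ioo a b ∈ nhds τ := by
    have h := (hder _ hI).map_nhds_eq (hne _ hI)
    rw [hsτ] at h
    rw [← h]
    exact Filter.image_mem_map (isOpen_Ioo.mem_nhds hI)
  have hleft : ∀ t ∈ Set.Ioo a b, tinv (s t) = t := fun t ht =>
    hmono.injOn (hinv _ ⟨t, ht, rfl⟩).1 ht (hinv _ ⟨t, ht, rfl⟩).2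
  have himg : tinv '' (s '' Set.Ioo a b) = Set.Ioo a b := by
    ext t
    constructor
    · rintro ⟨y, hy, rfl⟩
      exact (hinv y hy).1
    · intro ht
      exact ⟨s t, ⟨t, ht, rfl⟩, hleft t ht⟩
  have hmono' : StrictMonoOn tinv (s '' Set.Ioo a b) := by
    rintro _ ⟨t, ht, rfl⟩ _ ⟨u, hu, rfl⟩ h
    rw [hleft t ht, hleft u hu]
    exact (hmono.lt_iff_lt ht hu).1 h
  have hcont : ContinuousAt tinv τ := by
    refine hmono'.continuousAt_of_image_mem_nhds hJ ?_
    rw [himg]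
    exact isOpen_Ioo.mem_nhds hI
  refine ⟨hJ, (hder _ hI).hasDerivAt.of_local_left_inverse hcont (hne _ hI) ?_⟩
  filter_upwards [hJ] with y hy using (hinv y hy).2

/-- **Kepler motion in the eccentric anomaly.** For a Kepler orbit
`x'' = -μx/|x|³` of negative energy `E = -ε²/2`, in the eccentric anomaly
parameter `s(t) = ∫_{t₀}^t ε/|x(u)| du` the reparametrized position `X = x ∘ s⁻¹`
satisfies `X'' + X = -(μ/ε²)A`, where `A` is the Laplace–Runge–Lenz vector along
the orbit. -/
theorem kepler_eccentric_anomaly_oscillator (μ ε : ℝ) (hμ : 0 < μ) (hε : 0 < ε)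
    (a b : ℝ) (x : ℝ → EuclideanSpace ℝ (Fin 3))
    (hx0 : ∀ t ∈ Set.Ioo a b, x t ≠ 0)
    (hxC : ContDiffOn ℝ 2 x (Set.Ioo a b))
    (hode : ∀ t ∈ Set.Ioo a b,
      deriv (deriv x) t = -((μ / ‖x t‖^3) • x t))
    (hE : ∀ t ∈ Set.Ioo a b, (1/2) * ‖deriv x t‖^2 - μ / ‖x t‖ = -ε^2 / 2)
    (t₀ : ℝ) (ht₀ : t₀ ∈ Set.Ioo a b)
    (s : ℝ → ℝ) (hs : ∀ t, s t = ∫ u in t₀..t, ε / ‖x u‖)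
    (A : ℝ → EuclideanSpace ℝ (Fin 3)) :
    StrictMonoOn s (Set.Ioo a b) ∧
    ∀ tinv : ℝ → ℝ,
      (∀ τ ∈ s '' Set.Ioo a b, tinv τ ∈ Set.Ioo a b ∧ s (tinv τ) = τ) →
      (∀ τ ∈ s '' Set.Ioo a b,
        A τ = ((1/μ) * (2 * (-ε^2 / 2) + μ / ‖(x ∘ tinv) τ‖)) • (x ∘ tinv) τ
          - ((1/μ) * ⟪(x ∘ tinv) τ, deriv x (tinv τ)⟫) • deriv x (tinv τ)) →
      ∀ τ ∈ s '' Set.Ioo a b,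
        deriv (deriv (x ∘ tinv)) τ + (x ∘ tinv) τ = -((μ / ε^2) • A τ) := by
  have hopen : IsOpen (Set.Ioo a b) := isOpen_Ioo
  have hnorm : ∀ t ∈ Set.Ioo a b, ‖x t‖ ≠ 0 := fun t ht => norm_ne_zero_iff.2 (hx0 t ht)
  have hcont : ContinuousOn (fun u => ε / ‖x u‖) (Set.Ioo a b) :=
    continuousOn_const.div hxC.continuousOn.norm hnorm
  have hds : ∀ t ∈ Set.Ioo a b, HasStrictDerivAt s (ε / ‖x t‖) t := by
    intro t ht
    have hsub : Set.uIcc t₀ t ⊆ Set.Ioo a b := Set.ordConnected_Ioo.uIcc_subset ht₀ ht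
    have h := intervalIntegral.integral_hasStrictDerivAt_right
      (hcont.mono hsub).intervalIntegrable
      (hcont.stronglyMeasurableAtFilter hopen t ht) (hcont.continuousAt (hopen.mem_nhds ht))
    rwa [← funext hs] at h
  have hpos : ∀ t ∈ Set.Ioo a b, 0 < ε / ‖x t‖ := fun t ht =>
    div_pos hε (norm_pos_iff.2 (hx0 t ht))
  have hmono : StrictMonoOn s (Set.Ioo a b) := by
    refine strictMonoOn_of_deriv_pos (convex_Ioo a b)
      (fun t ht => (hds t ht).hasDerivAt.continuousAt.continuousWithinAt) ?_
    intro t ht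
    rw [interior_Ioo] at ht
    rw [(hds t ht).hasDerivAt.deriv]
    exact hpos t ht
  refine ⟨hmono, fun tinv hinv hA τ hτ => ?_⟩
  have hdx : ∀ t ∈ Set.Ioo a b, HasDerivAt x (deriv x t) t := fun t ht =>
    ((hxC.contDiffAt (hopen.mem_nhds ht)).differentiableAt (by norm_num)).hasDerivAt
  have hddx : ∀ t ∈ Set.Ioo a b, HasDerivAt (deriv x) (-((μ / ‖x t‖^3) • x t)) t := by
    intro t ht
    have h2 : ContDiffOn ℝ (1 + 1) x (Set.Ioo a b) := by
      convert hxC using 1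
      norm_num
    have h1 := ((contDiffOn_succ_iff_deriv_of_isOpen hopen).1 h2).2.2
    rw [← hode t ht]
    exact ((h1.contDiffAt (hopen.mem_nhds ht)).differentiableAt (by norm_num)).hasDerivAt
  have hdt : ∀ σ ∈ s '' Set.Ioo a b, s '' Set.Ioo a b ∈ nhds σ ∧
      HasDerivAt tinv (ε / ‖x (tinv σ)‖)⁻¹ σ := fun σ hσ =>
    hasDerivAt_of_rightInverse (s' := fun t => ε / ‖x t‖) hmono hds
      (fun t ht => (hpos t ht).ne') hinv hσ
  have hdX : ∀ σ ∈ s '' Set.Ioo a b,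
      deriv (x ∘ tinv) σ = (‖x (tinv σ)‖ / ε) • deriv x (tinv σ) := by
    intro σ hσ
    have h := ((hdx _ (hinv σ hσ).1).scomp σ (hdt σ hσ).2).deriv
    rwa [inv_div] at h
  -- The formula for `X'` holds on a neighbourhood of `τ`, so it may be differentiated there.
  have hev : deriv (x ∘ tinv) =ᶠ[nhds τ]
      (fun t => (‖x t‖ / ε) • deriv x t) ∘ tinv := by
    filter_upwards [(hdt τ hτ).1] with σ hσ using hdX σ hσ
  have hI := (hinv τ hτ).1
  have hr := hnorm _ hI
  have hdr : HasDerivAt (fun t => ‖x t‖) (⟪x (tinv τ), deriv x (tinv τ)⟫ / ‖x (tinv τ)‖)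
      (tinv τ) := by
    have h := (hdx _ hI).norm_sq.sqrt (pow_ne_zero 2 hr)
    simp only [Real.sqrt_sq (norm_nonneg _)] at h
    rwa [mul_div_mul_left _ _ two_ne_zero] at h
  have hdd := (((hdr.div_const ε).smul (hddx _ hI)).scomp τ (hdt τ hτ).2).deriv
  rw [hev.deriv_eq, hA τ hτ]
  refine (congrArg (· + (x ∘ tinv) τ) hdd).trans ?_
  simp only [Function.comp_apply]
  generalize ⟪x (tinv τ), deriv x (tinv τ)⟫ = p
  generalize ‖x (tinv τ)‖ = r at hr
  have hε' := hε.ne'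
  have hμ' := hμ.ne'
  match_scalars <;> field_simp <;> ring
end
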